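/- Let W be a rectilinear polygonal environment with free space F, fix points s_A,s_B,t_A,t_B ∈ F, let R be a corridor, and let γ(R) be the giant component of the influence region I(R). Then for every p ∈ R and every q ∈ γ(R), every shortest path in F from p to q is xy-monotone. -/

import Mathlib

open Set
open scoped ENNReal

noncomputable section

/-- The ℓ∞ norm of a point of `ℝ²`. -/
def linf (p : ℝ × ℝ) : ℝ := max |p.1| |p.2|

/-- The ℓ₁ norm of a point of `ℝ²`. -/
def l1 (p : ℝ × ℝ) : ℝ := |p.1| + |p.2|

/-- The Euclidean distance between two points of `ℝ²`. -/
def euclDist (p q : ℝ × ℝ) : ℝ := Real.sqrt ((p.1 - q.1) ^ 2 + (p.2 - q.2) ^ 2)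

/-- A closed axis-aligned rectangle with nonempty interior. -/
def IsClosedAxisRect (S : Set (ℝ × ℝ)) : Prop :=
  ∃ a b c d : ℝ, a < b ∧ c < d ∧ S = Icc a b ×ˢ Icc c d

/-- A rectilinear polygonal environment: a nonempty compact subset of the plane that is a
finite union of closed axis-aligned rectangles with nonempty interior, and that equals the
closure of its interior. -/
def IsRectilinearEnv (W : Set (ℝ × ℝ)) : Prop :=
  W.Nonempty ∧ IsCompact W ∧
    (∃ 𝓡 : Finset (Set (ℝ × ℝ)), (∀ S ∈ 𝓡, IsClosedAxisRect S) ∧ W = ⋃ S ∈ 𝓡, S) ∧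
    W = closure (interior W)

/-- The free space of a workspace `W`: placements of the center of a closed axis-aligned
unit square keeping the square inside `W`. -/
def freeSpace (W : Set (ℝ × ℝ)) : Set (ℝ × ℝ) :=
  {p | ∀ q : ℝ × ℝ, linf q ≤ 1 / 2 → p + q ∈ W}

/-- A free configuration of the two robots. -/
def FreeConf (F : Set (ℝ × ℝ)) (c : (ℝ × ℝ) × (ℝ × ℝ)) : Prop :=
  c.1 ∈ F ∧ c.2 ∈ F ∧ 1 ≤ linf (c.1 - c.2)

/-- The ℓ₁-length (total variation w.r.t. the metric induced by the ℓ₁-norm) of a planar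
path on a set of times. -/
def l1VarOn (γ : ℝ → ℝ × ℝ) (s : Set ℝ) : ℝ≥0∞ :=
  eVariationOn (fun t => (WithLp.equiv 1 (ℝ × ℝ)).symm (γ t)) s

/-- An `(s,t)`-plan: a continuous map on `[0,1]` from `s` to `t`. -/
def IsPlan (s t : (ℝ × ℝ) × (ℝ × ℝ)) (pln : ℝ → (ℝ × ℝ) × (ℝ × ℝ)) : Prop :=
  ContinuousOn pln (Icc 0 1) ∧ pln 0 = s ∧ pln 1 = t

/-- A plan is feasible if every configuration along it is free. -/
def Feasible (F : Set (ℝ × ℝ)) (pln : ℝ → (ℝ × ℝ) × (ℝ × ℝ)) : Prop :=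
  ∀ lam ∈ Icc (0 : ℝ) 1, FreeConf F (pln lam)

/-- The cost of a plan: the sum of the ℓ₁-lengths of the two robot paths. -/
def planCost (pln : ℝ → (ℝ × ℝ) × (ℝ × ℝ)) : ℝ≥0∞ :=
  l1VarOn (fun t => (pln t).1) (Icc 0 1) + l1VarOn (fun t => (pln t).2) (Icc 0 1)

/-- An optimal `(s,t)`-plan: feasible, and of cost at most that of every feasible plan. -/
def IsOptimalPlan (F : Set (ℝ × ℝ)) (s t : (ℝ × ℝ) × (ℝ × ℝ))
    (pln : ℝ → (ℝ × ℝ) × (ℝ × ℝ)) : Prop :=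
  IsPlan s t pln ∧ Feasible F pln ∧
    ∀ pln', IsPlan s t pln' → Feasible F pln' → planCost pln ≤ planCost pln'

/-- A decoupled plan: `[0,1]` splits into finitely many subintervals on each of which
one of the two robots is parked. -/
def IsDecoupled (pln : ℝ → (ℝ × ℝ) × (ℝ × ℝ)) : Prop :=
  ∃ (n : ℕ) (τ : ℕ → ℝ), τ 0 = 0 ∧ τ n = 1 ∧ (∀ i, i < n → τ i ≤ τ (i + 1)) ∧
    ∀ i, i < n →
      (∀ a ∈ Icc (τ i) (τ (i + 1)), (pln a).1 = (pln (τ i)).1) ∨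
      (∀ a ∈ Icc (τ i) (τ (i + 1)), (pln a).2 = (pln (τ i)).2)

/-- A rectilinear path: piecewise linear, with every linear piece horizontal or vertical. -/
def IsRectilinearPath (γ : ℝ → ℝ × ℝ) : Prop :=
  ∃ (n : ℕ) (τ : ℕ → ℝ), τ 0 = 0 ∧ τ n = 1 ∧ (∀ i, i < n → τ i ≤ τ (i + 1)) ∧
    ∀ i, i < n → ∃ v : ℝ × ℝ, (v.1 = 0 ∨ v.2 = 0) ∧
      ∀ a ∈ Icc (τ i) (τ (i + 1)), γ a = γ (τ i) + (a - τ i) • v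

/-- A rectilinear plan: both robot paths are rectilinear. -/
def IsRectilinearPlan (pln : ℝ → (ℝ × ℝ) × (ℝ × ℝ)) : Prop :=
  IsRectilinearPath (fun t => (pln t).1) ∧ IsRectilinearPath (fun t => (pln t).2)

/-- An alternating path: horizontal and vertical pieces (possibly of zero length)
alternate. -/
def IsAlternatingPath (γ : ℝ → ℝ × ℝ) : Prop :=
  ∃ (n : ℕ) (τ : ℕ → ℝ) (d : ℕ → Bool), τ 0 = 0 ∧ τ n = 1 ∧
    (∀ i, i < n → τ i ≤ τ (i + 1)) ∧
    (∀ i, i + 1 < n → d (i + 1) = !d i) ∧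
    ∀ i, i < n → ∃ v : ℝ × ℝ,
      (if d i = true then v.2 = 0 else v.1 = 0) ∧
      ∀ a ∈ Icc (τ i) (τ (i + 1)), γ a = γ (τ i) + (a - τ i) • v

/-- An alternating plan. -/
def IsAlternatingPlan (pln : ℝ → (ℝ × ℝ) × (ℝ × ℝ)) : Prop :=
  IsAlternatingPath (fun t => (pln t).1) ∧ IsAlternatingPath (fun t => (pln t).2)

/-- `y` is the height of a horizontal edge of `∂F`. -/
def IsHorizEdgeY (F : Set (ℝ × ℝ)) (y : ℝ) : Prop :=
  ∃ a b : ℝ, a < b ∧ (Icc a b ×ˢ ({y} : Set ℝ)) ⊆ frontier F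

/-- `x` is the abscissa of a vertical edge of `∂F`. -/
def IsVertEdgeX (F : Set (ℝ × ℝ)) (x : ℝ) : Prop :=
  ∃ a b : ℝ, a < b ∧ (({x} : Set ℝ) ×ˢ Icc a b) ⊆ frontier F

/-- `y` is the height of a horizontal `i`-line for some `i ≤ k` (w.r.t. the free space `F`
and the set `P` of the four source/target points). -/
def IsHorizLineY (F : Set (ℝ × ℝ)) (P : Set (ℝ × ℝ)) (k : ℕ) (y : ℝ) : Prop :=
  ∃ i : ℕ, i ≤ k ∧
    ((∃ y₀ : ℝ, IsHorizEdgeY F y₀ ∧ |y - y₀| = (i : ℝ)) ∨ ∃ p ∈ P, |y - p.2| = (i : ℝ))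

/-- `x` is the abscissa of a vertical `i`-line for some `i ≤ k`. -/
def IsVertLineX (F : Set (ℝ × ℝ)) (P : Set (ℝ × ℝ)) (k : ℕ) (x : ℝ) : Prop :=
  ∃ i : ℕ, i ≤ k ∧
    ((∃ x₀ : ℝ, IsVertEdgeX F x₀ ∧ |x - x₀| = (i : ℝ)) ∨ ∃ p ∈ P, |x - p.1| = (i : ℝ))

/-- A grid point: a point of `F` lying on a horizontal grid line and a vertical grid line. -/
def IsGridPoint (F : Set (ℝ × ℝ)) (P : Set (ℝ × ℝ)) (u : ℝ × ℝ) : Prop :=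
  u ∈ F ∧ IsHorizLineY F P 2 u.2 ∧ IsVertLineX F P 2 u.1

/-- A grid edge: a closed segment in `F` joining two grid points on a common grid line, with
no grid point in its relative interior. -/
def IsGridEdge (F P : Set (ℝ × ℝ)) (u v : ℝ × ℝ) : Prop :=
  IsGridPoint F P u ∧ IsGridPoint F P v ∧ (u.1 = v.1 ∨ u.2 = v.2) ∧
    segment ℝ u v ⊆ F ∧ ∀ w ∈ openSegment ℝ u v, ¬ IsGridPoint F P w

/-- A vertex of the configuration graph. -/
def ConfVertex (F P : Set (ℝ × ℝ)) (u : (ℝ × ℝ) × (ℝ × ℝ)) : Prop :=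
  IsGridPoint F P u.1 ∧ IsGridPoint F P u.2 ∧ 1 ≤ linf (u.1 - u.2)

/-- An edge of the configuration graph. -/
def ConfEdge (F P : Set (ℝ × ℝ)) (u v : (ℝ × ℝ) × (ℝ × ℝ)) : Prop :=
  ConfVertex F P u ∧ ConfVertex F P v ∧
    ((u.1 = v.1 ∧ IsGridEdge F P u.2 v.2) ∨ (u.2 = v.2 ∧ IsGridEdge F P u.1 v.1))

/-- A path in `S` from `p` to `q`. -/
def IsPathIn (S : Set (ℝ × ℝ)) (p q : ℝ × ℝ) (γ : ℝ → ℝ × ℝ) : Prop :=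
  ContinuousOn γ (Icc 0 1) ∧ γ 0 = p ∧ γ 1 = q ∧ ∀ t ∈ Icc (0 : ℝ) 1, γ t ∈ S

/-- The ℓ₁-length of a path parameterized over `[0,1]`. -/
def pathLen (γ : ℝ → ℝ × ℝ) : ℝ≥0∞ := l1VarOn γ (Icc 0 1)

/-- A shortest path in `S` from `p` to `q` (w.r.t. ℓ₁-length). -/
def IsShortestPathIn (S : Set (ℝ × ℝ)) (p q : ℝ × ℝ) (γ : ℝ → ℝ × ℝ) : Prop :=
  IsPathIn S p q γ ∧ ∀ γ', IsPathIn S p q γ' → pathLen γ ≤ pathLen γ'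

/-- An x-monotone path. -/
def XMonotone (γ : ℝ → ℝ × ℝ) : Prop :=
  MonotoneOn (fun t => (γ t).1) (Icc 0 1) ∨ AntitoneOn (fun t => (γ t).1) (Icc 0 1)

/-- A y-monotone path. -/
def YMonotone (γ : ℝ → ℝ × ℝ) : Prop :=
  MonotoneOn (fun t => (γ t).2) (Icc 0 1) ∨ AntitoneOn (fun t => (γ t).2) (Icc 0 1)

/-- An xy-monotone path. -/
def XYMonotone (γ : ℝ → ℝ × ℝ) : Prop := XMonotone γ ∧ YMonotone γ

/-- The union of the primary horizontal lines (horizontal 0-lines and 1-lines). -/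
def primaryHorizSet (F P : Set (ℝ × ℝ)) : Set (ℝ × ℝ) :=
  {p | IsHorizLineY F P 1 p.2}

/-- A corridor: the closure of a connected component of `F` minus the primary horizontal
lines. -/
def IsCorridor (F P : Set (ℝ × ℝ)) (R : Set (ℝ × ℝ)) : Prop :=
  ∃ c ∈ F \ primaryHorizSet F P,
    R = closure (connectedComponentIn (F \ primaryHorizSet F P) c)

/-- `C` is a connected component of `S`. -/
def IsCompOf (S C : Set (ℝ × ℝ)) : Prop := ∃ c ∈ S, C = connectedComponentIn S c

/-- An x-separated configuration. -/
def XSep (c : (ℝ × ℝ) × (ℝ × ℝ)) : Prop := 1 ≤ |c.1.1 - c.2.1|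

/-- A y-separated configuration. -/
def YSep (c : (ℝ × ℝ) × (ℝ × ℝ)) : Prop := 1 ≤ |c.1.2 - c.2.2|

/-- Two configurations have the same x-order. -/
def SameXOrder (c d : (ℝ × ℝ) × (ℝ × ℝ)) : Prop :=
  Real.sign (c.1.1 - c.2.1) = Real.sign (d.1.1 - d.2.1)

/-- Two configurations have the same y-order. -/
def SameYOrder (c d : (ℝ × ℝ) × (ℝ × ℝ)) : Prop :=
  Real.sign (c.1.2 - c.2.2) = Real.sign (d.1.2 - d.2.2)

/-- During `[a,b]` the path `γ` traverses (affinely) a straight axis-parallel segment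
contained in `F` whose endpoints are grid points. -/
def MoveSeg (F P : Set (ℝ × ℝ)) (γ : ℝ → ℝ × ℝ) (a b : ℝ) : Prop :=
  IsGridPoint F P (γ a) ∧ IsGridPoint F P (γ b) ∧
    segment ℝ (γ a) (γ b) ⊆ F ∧
    ∃ v : ℝ × ℝ, (v.1 = 0 ∨ v.2 = 0) ∧ ∀ t ∈ Icc a b, γ t = γ a + (t - a) • v

/-- A canonical-grid plan: a rectilinear decoupled plan that is a finite concatenation of
moves in each of which one robot is parked at a grid point while the other traverses a
straight axis-parallel segment of the grid contained in `F`; in particular, every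
breakpoint of either robot path is a grid point. -/
def IsCanonicalGridPlan (F P : Set (ℝ × ℝ)) (pln : ℝ → (ℝ × ℝ) × (ℝ × ℝ)) : Prop :=
  IsRectilinearPlan pln ∧ IsDecoupled pln ∧
    ∃ (n : ℕ) (τ : ℕ → ℝ), τ 0 = 0 ∧ τ n = 1 ∧ (∀ i, i < n → τ i ≤ τ (i + 1)) ∧
      ∀ i, i < n →
        (IsGridPoint F P (pln (τ i)).1 ∧
            (∀ a ∈ Icc (τ i) (τ (i + 1)), (pln a).1 = (pln (τ i)).1) ∧
            MoveSeg F P (fun t => (pln t).2) (τ i) (τ (i + 1))) ∨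
        (IsGridPoint F P (pln (τ i)).2 ∧
            (∀ a ∈ Icc (τ i) (τ (i + 1)), (pln a).2 = (pln (τ i)).2) ∧
            MoveSeg F P (fun t => (pln t).1) (τ i) (τ (i + 1)))

/-- A path in the configuration graph from `s` to `t` with `k` edges. -/
def IsGraphPath (F P : Set (ℝ × ℝ)) (s t : (ℝ × ℝ) × (ℝ × ℝ)) (k : ℕ)
    (u : ℕ → (ℝ × ℝ) × (ℝ × ℝ)) : Prop :=
  u 0 = s ∧ u k = t ∧ ∀ j, j < k → ConfEdge F P (u j) (u (j + 1))

/-- The total weight (ℓ₁-distance in `ℝ⁴`) of a path in the configuration graph. -/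
def graphPathWeight (k : ℕ) (u : ℕ → (ℝ × ℝ) × (ℝ × ℝ)) : ℝ :=
  ∑ j ∈ Finset.range k, (l1 ((u (j + 1)).1 - (u j).1) + l1 ((u (j + 1)).2 - (u j).2))

/-- `pln` traverses the edges of the graph path `u` one after another (linearly
interpolating along each edge). -/
def IsEdgeTraversal (pln : ℝ → (ℝ × ℝ) × (ℝ × ℝ)) (k : ℕ)
    (u : ℕ → (ℝ × ℝ) × (ℝ × ℝ)) : Prop :=
  (k = 0 → ∀ a ∈ Icc (0 : ℝ) 1, pln a = u 0) ∧
    ∀ j, j < k → ∀ a ∈ Icc ((j : ℝ) / k) (((j : ℝ) + 1) / k),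
      pln a = u j + ((a - (j : ℝ) / k) * k) • (u (j + 1) - u j)

/-- A blocked pair for the corridor `[xlo,xhi] × [ylo,yhi]`. -/
def BlockedPair (F : Set (ℝ × ℝ)) (xlo xhi ylo yhi : ℝ) (u v : ℝ × ℝ) : Prop :=
  ∃ ρ ρ' edge : Set (ℝ × ℝ),
    ((ρ = Ico (xlo - 1) xlo ×ˢ Ico (ylo - 1) ylo ∧
        ρ' = Ico (xlo - 1) xlo ×ˢ Ioc yhi (yhi + 1) ∧
        edge = ({xlo} : Set ℝ) ×ˢ Icc (ylo - 1) (yhi + 1)) ∨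
      (ρ = Ioc xhi (xhi + 1) ×ˢ Ico (ylo - 1) ylo ∧
        ρ' = Ioc xhi (xhi + 1) ×ˢ Ioc yhi (yhi + 1) ∧
        edge = ({xhi} : Set ℝ) ×ˢ Icc (ylo - 1) (yhi + 1))) ∧
    ∃ φ φ' : Set (ℝ × ℝ), IsCompOf (ρ ∩ F) φ ∧ IsCompOf (ρ' ∩ F) φ' ∧
      (closure φ ∩ edge).Nonempty ∧ (closure φ' ∩ edge).Nonempty ∧
      ((u ∈ φ ∧ v ∈ φ') ∨ (u ∈ φ' ∧ v ∈ φ))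

/-- `[ν₁,ν₂] ⊆ [lam1,lam2]` is an unsafe interval for the plan `pln` w.r.t. the influence
region `IR`. -/
def IsUnsafeInterval (IR : Set (ℝ × ℝ)) (pln : ℝ → (ℝ × ℝ) × (ℝ × ℝ))
    (lam1 lam2 ν₁ ν₂ : ℝ) : Prop :=
  lam1 ≤ ν₁ ∧ ν₁ ≤ ν₂ ∧ ν₂ ≤ lam2 ∧
    (∀ ν ∈ Icc ν₁ ν₂, (pln ν).2 ∈ IR ∧ YSep (pln ν)) ∧
    (∀ a b : ℝ, lam1 ≤ a → a ≤ ν₁ → ν₂ ≤ b → b ≤ lam2 →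
      (∀ ν ∈ Icc a b, (pln ν).2 ∈ IR ∧ YSep (pln ν)) → a = ν₁ ∧ b = ν₂) ∧
    ∃ ν ∈ Icc ν₁ ν₂, ¬ XSep (pln ν)

/-!
A path has ℓ₁-length at most the ℓ₁-distance of its ends exactly when it is xy-monotone, so it
suffices to exhibit one xy-monotone path from `p` to `q` in the free space. After reflections
`p ≤ q` coordinatewise; let `k` be the point of `R` nearest to `q`. Each side of the box `[k, q]`
has length at most `1`, whereas the complement of the free space is a union of open squares of side
larger than `1`. A square that meets the box therefore starts north or east of `k`. If it starts
east of `k`, it extends eastward beyond `γ(R)` and its top edge is below `q`; if it starts north of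
`k`, it extends northward beyond `γ(R)` and its right edge is west of `q`. A point in squares of
both kinds would confine the connected set `γ(R)`, which contains `q`, to its north-east quadrant,
away from `k`. Hence the staircase bounding the squares of the first kind passes between the two
kinds.
-/

/-! ### ℓ₁-length and monotonicity -/

lemma l1_nonneg (z : ℝ × ℝ) : 0 ≤ l1 z := add_nonneg (abs_nonneg _) (abs_nonneg _)

lemma edist_toLp_one_eq_ofReal_l1 (z w : ℝ × ℝ) :
    edist ((WithLp.equiv 1 (ℝ × ℝ)).symm z) ((WithLp.equiv 1 (ℝ × ℝ)).symm w) =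
      ENNReal.ofReal (l1 (z - w)) := by
  rw [WithLp.prod_edist_eq_of_L1, l1, ENNReal.ofReal_add (abs_nonneg _) (abs_nonneg _),
    edist_dist, edist_dist]
  rfl

lemma l1VarOn_le_eVariationOn_fst_add_snd (g : ℝ → ℝ × ℝ) (s : Set ℝ) :
    l1VarOn g s ≤ eVariationOn (fun t => (g t).1) s + eVariationOn (fun t => (g t).2) s := by
  refine iSup_le fun ⟨n, u, hu, hus⟩ => ?_
  simp only [WithLp.prod_edist_eq_of_L1, Finset.sum_add_distrib]
  exact add_le_add (eVariationOn.sum_le (f := fun t => (g t).1) hu hus)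
    (eVariationOn.sum_le (f := fun t => (g t).2) hu hus)

lemma eVariationOn_Icc_eq_of_monotoneOn_or_antitoneOn {α : Type*} [LinearOrder α] {f : α → ℝ}
    {a b : α} (hab : a ≤ b) (hf : MonotoneOn f (Icc a b) ∨ AntitoneOn f (Icc a b)) :
    eVariationOn f (Icc a b) = ENNReal.ofReal |f a - f b| := by
  have ha := left_mem_Icc.2 hab
  have hb := right_mem_Icc.2 hab
  rcases hf with hf | hf
  · rw [abs_of_nonpos (sub_nonpos.2 (hf ha hb hab)), neg_sub, ← hf.eVariationOn_eq ha hb,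
      inter_self]
  · have hneg : eVariationOn (fun t => -f t) (Icc a b) = eVariationOn f (Icc a b) := by
      simp only [eVariationOn, edist_neg_neg]
    have hvar := hf.neg.eVariationOn_eq ha hb
    rw [inter_self] at hvar
    rw [abs_of_nonneg (sub_nonneg.2 (hf ha hb hab)), ← hneg, hvar, neg_sub_neg]

lemma XYMonotone.pathLen_le {g : ℝ → ℝ × ℝ} (hg : XYMonotone g) :
    pathLen g ≤ ENNReal.ofReal (l1 (g 0 - g 1)) := by
  refine (l1VarOn_le_eVariationOn_fst_add_snd g _).trans_eq ?_
  rw [eVariationOn_Icc_eq_of_monotoneOn_or_antitoneOn zero_le_one hg.1,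
    eVariationOn_Icc_eq_of_monotoneOn_or_antitoneOn zero_le_one hg.2,
    ← ENNReal.ofReal_add (abs_nonneg _) (abs_nonneg _)]
  rfl

lemma edist_add_edist_add_edist_le_eVariationOn_Icc {α E : Type*} [LinearOrder α]
    [PseudoEMetricSpace E] (f : α → E) {a s t b : α} (has : a ≤ s) (hst : s ≤ t) (htb : t ≤ b) :
    edist (f a) (f s) + edist (f s) (f t) + edist (f t) (f b) ≤ eVariationOn f (Icc a b) := by
  have edist_le {x y : α} (hxy : x ≤ y) : edist (f x) (f y) ≤ eVariationOn f (Icc x y) :=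
    eVariationOn.edist_le f (left_mem_Icc.2 hxy) (right_mem_Icc.2 hxy)
  have Icc_add_Icc {x y z : α} (hxy : x ≤ y) (hyz : y ≤ z) :
      eVariationOn f (Icc x y) + eVariationOn f (Icc y z) = eVariationOn f (Icc x z) := by
    simpa only [univ_inter] using eVariationOn.Icc_add_Icc f hxy hyz (mem_univ y)
  rw [← Icc_add_Icc (has.trans hst) htb, ← Icc_add_Icc has hst]
  exact add_le_add (add_le_add (edist_le has) (edist_le hst)) (edist_le htb)

lemma monotoneOn_or_antitoneOn_of_abs_sub_add_le {α : Type*} [Preorder α] {f : α → ℝ}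
    {S : Set α} {x y : ℝ}
    (h : ∀ s ∈ S, ∀ t ∈ S, s ≤ t → |x - f s| + |f s - f t| + |f t - y| ≤ |x - y|) :
    MonotoneOn f S ∨ AntitoneOn f S := by
  rcases le_total x y with hxy | hyx
  · refine Or.inl fun s hs t ht hst => ?_
    have hle := h s hs t ht hst
    rw [abs_of_nonpos (sub_nonpos.2 hxy)] at hle
    linarith [neg_abs_le (x - f s), le_abs_self (f s - f t), neg_abs_le (f t - y)]
  · refine Or.inr fun s hs t ht hst => ?_
    have hle := h s hs t ht hst
    rw [abs_of_nonneg (sub_nonneg.2 hyx)] at hle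
    linarith [le_abs_self (x - f s), neg_abs_le (f s - f t), le_abs_self (f t - y)]

lemma xyMonotone_of_pathLen_le {g : ℝ → ℝ × ℝ}
    (hg : pathLen g ≤ ENNReal.ofReal (l1 (g 0 - g 1))) : XYMonotone g := by
  have l1_add_le : ∀ s ∈ Icc (0 : ℝ) 1, ∀ t ∈ Icc (0 : ℝ) 1, s ≤ t →
      l1 (g 0 - g s) + l1 (g s - g t) + l1 (g t - g 1) ≤ l1 (g 0 - g 1) := by
    intro s hs t ht hst
    have hle := (edist_add_edist_add_edist_le_eVariationOn_Icc
      (fun t => (WithLp.equiv 1 (ℝ × ℝ)).symm (g t)) hs.1 hst ht.2).trans hg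
    simp only [edist_toLp_one_eq_ofReal_l1] at hle
    rwa [← ENNReal.ofReal_add (l1_nonneg _) (l1_nonneg _),
      ← ENNReal.ofReal_add (add_nonneg (l1_nonneg _) (l1_nonneg _)) (l1_nonneg _),
      ENNReal.ofReal_le_ofReal_iff (l1_nonneg _)] at hle
  have abs_sub_le₃ (a b c d : ℝ) : |a - d| ≤ |a - b| + |b - c| + |c - d| :=
    (abs_sub_le a c d).trans (add_le_add_left (abs_sub_le a b c) _)
  simp only [l1, Prod.fst_sub, Prod.snd_sub] at l1_add_le
  constructor
  · exact monotoneOn_or_antitoneOn_of_abs_sub_add_le fun s hs t ht hst => by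
      linarith [l1_add_le s hs t ht hst, abs_sub_le₃ (g 0).2 (g s).2 (g t).2 (g 1).2]
  · exact monotoneOn_or_antitoneOn_of_abs_sub_add_le fun s hs t ht hst => by
      linarith [l1_add_le s hs t ht hst, abs_sub_le₃ (g 0).1 (g s).1 (g t).1 (g 1).1]

lemma IsShortestPathIn.xyMonotone {S : Set (ℝ × ℝ)} {p q : ℝ × ℝ} {g g' : ℝ → ℝ × ℝ}
    (hg : IsShortestPathIn S p q g) (hg' : IsPathIn S p q g') (hmono : XYMonotone g') :
    XYMonotone g := by
  apply xyMonotone_of_pathLen_le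
  rw [hg.1.2.1, hg.1.2.2.1, ← hg'.2.1, ← hg'.2.2.1]
  exact (hg.2 g' hg').trans hmono.pathLen_le

/-! ### Sets with fat complement -/

/-- Every point outside `F` lies in an open ball of diameter larger than `1` that avoids `F`. In
the plane `ℝ × ℝ`, which carries the sup metric, these balls are open axis-parallel squares of side
larger than `1`: the obstacles seen by the center of a unit square robot. -/
def HasFatCompl {X : Type*} [PseudoMetricSpace X] (F : Set X) : Prop :=
  ∀ z ∉ F, ∃ w r, 1 / 2 < r ∧ z ∈ Metric.ball w r ∧ Disjoint (Metric.ball w r) F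

lemma HasFatCompl.preimage {X Y : Type*} [PseudoMetricSpace X] [PseudoMetricSpace Y] {F : Set Y}
    (hF : HasFatCompl F) (σ : X ≃ᵢ Y) : HasFatCompl (σ ⁻¹' F) := by
  intro z hz
  obtain ⟨w, r, hr, hzw, hdisj⟩ := hF (σ z) hz
  have hball : Metric.ball (σ.symm w) r = σ ⁻¹' Metric.ball w r := (σ.preimage_ball w r).symm
  exact ⟨σ.symm w, r, hr, hball ▸ hzw, hball ▸ hdisj.preimage σ⟩

lemma hasFatCompl_freeSpace {W : Set (ℝ × ℝ)} (hW : IsClosed W) : HasFatCompl (freeSpace W) := by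
  intro z hz
  simp only [freeSpace, mem_ofPred_eq, not_forall] at hz
  obtain ⟨k, hk, hzk⟩ := hz
  obtain ⟨ε, hε, hball⟩ := Metric.isOpen_iff.1 hW.isOpen_compl _ hzk
  have linf_eq_norm (v : ℝ × ℝ) : linf v = ‖v‖ := rfl
  refine ⟨z + k, ε + 1 / 2, by linarith, ?_, disjoint_left.2 fun v hv hvF => ?_⟩
  · rw [Metric.mem_ball, dist_self_add_right, ← linf_eq_norm]
    linarith
  · obtain ⟨y, hvy, hy⟩ := exists_dist_le_lt (by norm_num) hε hv
    refine hball hy ?_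
    simpa using hvF (y - v) (by rwa [linf_eq_norm, ← dist_eq_norm, dist_comm])

/-! ### Staircases -/

/-- The lower `1`-Lipschitz envelope of `D` in the rotated coordinates `(x + y, x - y)`. -/
def rotatedEnvelope (D : Set (ℝ × ℝ)) (s : ℝ) : ℝ :=
  ⨅ d : D, (|s - (d.1.1 + d.1.2)| + (d.1.1 - d.1.2))

/-- The north-west boundary of the union of the closed south-east quadrants with apex in `D`,
parametrized by `x + y`: in the coordinates `(x + y, x - y)` such a quadrant is the region above
the graph of a translate of the absolute value. -/
def staircase (D : Set (ℝ × ℝ)) (s : ℝ) : ℝ × ℝ :=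
  ((s + rotatedEnvelope D s) / 2, (s - rotatedEnvelope D s) / 2)

lemma staircase_fst_add_snd (D : Set (ℝ × ℝ)) (s : ℝ) :
    (staircase D s).1 + (staircase D s).2 = s := by
  simp only [staircase]
  ring

lemma staircase_fst_sub_snd (D : Set (ℝ × ℝ)) (s : ℝ) :
    (staircase D s).1 - (staircase D s).2 = rotatedEnvelope D s := by
  simp only [staircase]
  ring

section Staircase

variable {D : Set (ℝ × ℝ)} (hD : BddBelow ((fun d => d.1 - d.2) '' D))

include hD

lemma rotatedEnvelope_le {d : ℝ × ℝ} (hd : d ∈ D) (s : ℝ) :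
    rotatedEnvelope D s ≤ |s - (d.1 + d.2)| + (d.1 - d.2) := by
  obtain ⟨m, hm⟩ := hD
  refine ciInf_le ⟨m, forall_mem_range.2 fun e => ?_⟩ (⟨d, hd⟩ : D)
  exact (hm (mem_image_of_mem _ e.2)).trans (le_add_of_nonneg_left (abs_nonneg _))

lemma lipschitzWith_rotatedEnvelope (hne : D.Nonempty) : LipschitzWith 1 (rotatedEnvelope D) := by
  have : Nonempty D := hne.to_subtype
  refine LipschitzWith.of_le_add fun s t => sub_le_iff_le_add.1 (le_ciInf fun d => ?_)
  have htri := abs_sub_le s t (d.1.1 + d.1.2)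
  rw [Real.dist_eq]
  linarith [rotatedEnvelope_le hD d.2 s]

lemma continuous_staircase (hne : D.Nonempty) : Continuous (staircase D) := by
  have := (lipschitzWith_rotatedEnvelope hD hne).continuous
  unfold staircase
  fun_prop

lemma monotone_staircase (hne : D.Nonempty) : Monotone (staircase D) := by
  intro s t hst
  have hlip := (lipschitzWith_rotatedEnvelope hD hne).dist_le_mul s t
  rw [NNReal.coe_one, one_mul, Real.dist_eq, Real.dist_eq, abs_of_nonpos (sub_nonpos.2 hst),
    abs_le] at hlip
  constructor <;> simp only [staircase] <;> linarith

lemma le_staircase_snd {d : ℝ × ℝ} (hd : d ∈ D) {s : ℝ} (h : d.1 < (staircase D s).1) :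
    d.2 ≤ (staircase D s).2 := by
  by_contra! h'
  have hle := rotatedEnvelope_le hD hd s
  have hsum := staircase_fst_add_snd D s
  have hsub := staircase_fst_sub_snd D s
  rcases abs_cases (s - (d.1 + d.2)) with ⟨habs, -⟩ | ⟨habs, -⟩ <;> linarith

lemma staircase_fst_add_snd_eq_self {d : ℝ × ℝ} (hd : d ∈ D)
    (hmax : ∀ e ∈ D, e.1 < d.1 → e.2 ≤ d.2) : staircase D (d.1 + d.2) = d := by
  have : Nonempty D := ⟨⟨d, hd⟩⟩
  have henv : rotatedEnvelope D (d.1 + d.2) = d.1 - d.2 := by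
    refine le_antisymm (by simpa using rotatedEnvelope_le hD hd (d.1 + d.2))
      (le_ciInf fun e => ?_)
    by_contra! hlt
    have habs := abs_lt.1 (lt_sub_iff_add_lt.2 hlt)
    linarith [hmax e e.2 (by linarith)]
  ext <;> simp [staircase, henv]

end Staircase

lemma exists_mem_northWest_of_staircase {D : Set (ℝ × ℝ)} (hne : D.Nonempty) {s x y : ℝ}
    (hx : (staircase D s).1 < x) (hy : y < (staircase D s).2) : ∃ d ∈ D, d.1 < x ∧ y < d.2 := by
  have : Nonempty D := hne.to_subtype
  have hsum := staircase_fst_add_snd D s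
  have hsub := staircase_fst_sub_snd D s
  obtain ⟨ε, hε, hε_lt⟩ := exists_between (lt_min (sub_pos.2 hx) (sub_pos.2 hy))
  rw [lt_min_iff] at hε_lt
  obtain ⟨⟨d, hd⟩, hlt⟩ := exists_lt_of_ciInf_lt
    (show rotatedEnvelope D s < rotatedEnvelope D s + 2 * ε by linarith)
  have habs := abs_lt.1 (lt_sub_iff_add_lt.2 hlt)
  exact ⟨d, hd, by linarith, by linarith⟩

/-! ### Square obstacles and connected sets -/

lemma mem_ball_prod_iff_mem_Ioo {v w : ℝ × ℝ} {r : ℝ} :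
    v ∈ Metric.ball w r ↔
      v.1 ∈ Ioo (w.1 - r) (w.1 + r) ∧ v.2 ∈ Ioo (w.2 - r) (w.2 + r) := by
  rw [← Real.ball_eq_Ioo, ← Real.ball_eq_Ioo, ← mem_prod, ball_prod_same]

/-- The points whose closed eastward ray misses `C`. -/
def eastClear (C : Set (ℝ × ℝ)) : Set (ℝ × ℝ) := {z | ∀ c ∈ C, c.2 = z.2 → c.1 < z.1}

/-- The points whose closed northward ray misses `C`. -/
def northClear (C : Set (ℝ × ℝ)) : Set (ℝ × ℝ) := {z | ∀ c ∈ C, c.1 = z.1 → c.2 < z.2}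

lemma subset_Ioi_prod_Ioi_of_mem_eastClear_of_mem_northClear {C : Set (ℝ × ℝ)}
    (hC : IsPreconnected C) {q z : ℝ × ℝ} (hq : q ∈ C) (hzq : z ≤ q) (heast : z ∈ eastClear C)
    (hnorth : z ∈ northClear C) : C ⊆ Ioi z.1 ×ˢ Ioi z.2 := by
  have hclosure : closure (Ioi z.1 ×ˢ Ioi z.2) ∩ C ⊆ Ioi z.1 ×ˢ Ioi z.2 := by
    rw [closure_prod_eq, closure_Ioi, closure_Ioi]
    rintro c ⟨⟨h₁, h₂⟩, hc⟩
    exact ⟨lt_of_le_of_ne h₁ fun h => (hnorth c hc h.symm).not_ge h₂,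
      lt_of_le_of_ne h₂ fun h => (heast c hc h.symm).not_ge h₁⟩
  refine hC.subset_of_closure_inter_subset (isOpen_Ioi.prod isOpen_Ioi)
    ⟨q, hq, hclosure ⟨?_, hq⟩⟩ hclosure
  rw [closure_prod_eq, closure_Ioi, closure_Ioi]
  exact hzq

lemma lt_add_of_inf_le_sub {b c q r w z : ℝ} (hr : 1 / 2 < r) (hbq : b ⊓ q ≤ w - r)
    (hwz : w - r < z) (hzq : z ≤ q) (hc : c ≤ b + 1) : c < w + r := by
  have hb : b ≤ w - r := (inf_le_iff.1 hbq).resolve_right (not_le.2 (hwz.trans_le hzq))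
  linarith

section Obstacle

variable {C : Set (ℝ × ℝ)} {b q w z : ℝ × ℝ} {r : ℝ} (hr : 1 / 2 < r)
  (hdisj : Disjoint (Metric.ball w r) C) (hz : z ∈ Metric.ball w r) (hzq : z ≤ q)
  (hCb : ∀ c ∈ C, c ≤ b + 1)

include hr hdisj hz hzq hCb

lemma ball_subset_eastClear (hw : (b ⊓ q).1 ≤ w.1 - r) : Metric.ball w r ⊆ eastClear C := by
  rw [mem_ball_prod_iff_mem_Ioo] at hz
  intro v hv c hc hcv
  by_contra! hvc
  rw [mem_ball_prod_iff_mem_Ioo] at hv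
  refine disjoint_right.1 hdisj hc (mem_ball_prod_iff_mem_Ioo.2
    ⟨⟨hv.1.1.trans_le hvc, ?_⟩, hcv ▸ hv.2⟩)
  exact lt_add_of_inf_le_sub hr hw hz.1.1 hzq.1 (hCb c hc).1

lemma ball_subset_northClear (hw : (b ⊓ q).2 ≤ w.2 - r) : Metric.ball w r ⊆ northClear C := by
  rw [mem_ball_prod_iff_mem_Ioo] at hz
  intro v hv c hc hcv
  by_contra! hvc
  rw [mem_ball_prod_iff_mem_Ioo] at hv
  refine disjoint_right.1 hdisj hc (mem_ball_prod_iff_mem_Ioo.2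
    ⟨hcv ▸ hv.1, hv.2.1.trans_le hvc, ?_⟩)
  exact lt_add_of_inf_le_sub hr hw hz.2.1 hzq.2 (hCb c hc).2

lemma snd_add_le_of_inf_fst_le (hq : q ∈ C) (hw : (b ⊓ q).1 ≤ w.1 - r) : w.2 + r ≤ q.2 := by
  rw [mem_ball_prod_iff_mem_Ioo] at hz
  by_contra! hqw
  exact disjoint_right.1 hdisj hq (mem_ball_prod_iff_mem_Ioo.2
    ⟨⟨hz.1.1.trans_le hzq.1, lt_add_of_inf_le_sub hr hw hz.1.1 hzq.1 (hCb q hq).1⟩,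
      hz.2.1.trans_le hzq.2, hqw⟩)

lemma fst_add_le_of_inf_snd_le (hq : q ∈ C) (hw : (b ⊓ q).2 ≤ w.2 - r) : w.1 + r ≤ q.1 := by
  rw [mem_ball_prod_iff_mem_Ioo] at hz
  by_contra! hqw
  exact disjoint_right.1 hdisj hq (mem_ball_prod_iff_mem_Ioo.2
    ⟨⟨hz.1.1.trans_le hzq.1, hqw⟩, hz.2.1.trans_le hzq.2,
      lt_add_of_inf_le_sub hr hw hz.2.1 hzq.2 (hCb q hq).2⟩)

end Obstacle

lemma fst_le_or_snd_le_of_notMem_ball {k w z : ℝ × ℝ} {r : ℝ} (hk : k ∉ Metric.ball w r)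
    (hz : z ∈ Metric.ball w r) (hkz : k ≤ z) : k.1 ≤ w.1 - r ∨ k.2 ≤ w.2 - r := by
  contrapose! hk
  rw [mem_ball_prod_iff_mem_Ioo] at hz ⊢
  exact ⟨⟨hk.1, hkz.1.trans_lt hz.1.2⟩, hk.2, hkz.2.trans_lt hz.2.2⟩

/-! ### The monotone path along the barrier -/

/-- The apexes of the staircase that leads from `p` through `k` to `q`: between `k` and `q` it has
to stay north-west of every obstacle that extends eastward beyond `C`. -/
def barrier (C : Set (ℝ × ℝ)) (p k q : ℝ × ℝ) : Set (ℝ × ℝ) :=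
  {p, k, q} ∪ Icc k q ∩ eastClear C

section Barrier

variable {C : Set (ℝ × ℝ)} {p k q : ℝ × ℝ}

lemma left_mem_barrier : p ∈ barrier C p k q := by simp [barrier]

lemma middle_mem_barrier : k ∈ barrier C p k q := by simp [barrier]

lemma right_mem_barrier : q ∈ barrier C p k q := by simp [barrier]

variable (hpk : p ≤ k) (hkq : k ≤ q)

include hpk hkq

lemma barrier_subset_Icc : barrier C p k q ⊆ Icc p q := by
  rintro d ((rfl | rfl | rfl) | ⟨hd, -⟩)
  · exact left_mem_Icc.2 (hpk.trans hkq)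
  · exact ⟨hpk, hkq⟩
  · exact right_mem_Icc.2 (hpk.trans hkq)
  · exact ⟨hpk.trans hd.1, hd.2⟩

lemma bddBelow_fst_sub_snd_barrier :
    BddBelow ((fun d : ℝ × ℝ => d.1 - d.2) '' barrier C p k q) := by
  refine ⟨p.1 - q.2, forall_mem_image.2 fun d hd => ?_⟩
  obtain ⟨hpd, hdq⟩ := barrier_subset_Icc hpk hkq hd
  exact sub_le_sub hpd.1 hdq.2

lemma staircase_barrier_left : staircase (barrier C p k q) (p.1 + p.2) = p :=
  staircase_fst_add_snd_eq_self (bddBelow_fst_sub_snd_barrier hpk hkq) left_mem_barrier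
    fun _ hd hlt => absurd (barrier_subset_Icc hpk hkq hd).1.1 hlt.not_ge

lemma staircase_barrier_middle : staircase (barrier C p k q) (k.1 + k.2) = k := by
  refine staircase_fst_add_snd_eq_self (bddBelow_fst_sub_snd_barrier hpk hkq) middle_mem_barrier ?_
  rintro d ((rfl | rfl | rfl) | ⟨hd, -⟩) hlt
  · exact hpk.2
  · exact le_rfl
  · exact absurd hkq.1 hlt.not_ge
  · exact absurd hd.1.1 hlt.not_ge

lemma staircase_barrier_right : staircase (barrier C p k q) (q.1 + q.2) = q :=
  staircase_fst_add_snd_eq_self (bddBelow_fst_sub_snd_barrier hpk hkq) right_mem_barrier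
    fun _ hd _ => (barrier_subset_Icc hpk hkq hd).2.2

lemma continuous_staircase_barrier : Continuous (staircase (barrier C p k q)) :=
  continuous_staircase (bddBelow_fst_sub_snd_barrier hpk hkq) ⟨p, left_mem_barrier⟩

lemma monotone_staircase_barrier : Monotone (staircase (barrier C p k q)) :=
  monotone_staircase (bddBelow_fst_sub_snd_barrier hpk hkq) ⟨p, left_mem_barrier⟩

lemma staircase_barrier_notMem_ball_of_fst_le {w : ℝ × ℝ} {r s : ℝ}
    (hks : k ≤ staircase (barrier C p k q) s) (hsq : staircase (barrier C p k q) s ≤ q)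
    (hclear : Metric.ball w r ⊆ eastClear C) (hk : k.1 ≤ w.1 - r) (hq : w.2 + r ≤ q.2) :
    staircase (barrier C p k q) s ∉ Metric.ball w r := by
  set z := staircase (barrier C p k q) s
  intro hzw
  obtain ⟨⟨hwz₁, hzw₁⟩, hwz₂, hzw₂⟩ := mem_ball_prod_iff_mem_Ioo.1 hzw
  obtain ⟨x, hwx, hxz⟩ := exists_between hwz₁
  obtain ⟨y, hzy, hyw⟩ := exists_between hzw₂
  have hball : (x, y) ∈ Metric.ball w r :=
    mem_ball_prod_iff_mem_Ioo.2 ⟨⟨hwx, hxz.trans hzw₁⟩, hwz₂.trans hzy, hyw⟩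
  have hbox : (x, y) ∈ Icc k q :=
    ⟨⟨hk.trans hwx.le, hks.2.trans hzy.le⟩, hxz.le.trans hsq.1, hyw.le.trans hq⟩
  exact (le_staircase_snd (bddBelow_fst_sub_snd_barrier hpk hkq)
    (Or.inr ⟨hbox, hclear hball⟩) hxz).not_gt hzy

end Barrier

lemma staircase_barrier_notMem_ball_of_snd_le {C : Set (ℝ × ℝ)} (hC : IsPreconnected C)
    {p k q w : ℝ × ℝ} {r s : ℝ} (hpk : p ≤ k) (hk : k ∈ C) (hq : q ∈ C)
    (hclear : Metric.ball w r ⊆ northClear C) (hwk : w.1 - r < k.1) (hkw : k.2 ≤ w.2 - r)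
    (hwq : w.1 + r ≤ q.1) (hqw : q.2 < w.2 + r) :
    staircase (barrier C p k q) s ∉ Metric.ball w r := by
  intro hzw
  obtain ⟨⟨-, hzw₁⟩, hwz₂, -⟩ := mem_ball_prod_iff_mem_Ioo.1 hzw
  obtain ⟨d, hd, hdw, hwd⟩ :=
    exists_mem_northWest_of_staircase ⟨p, left_mem_barrier⟩ hzw₁ hwz₂
  rcases hd with (rfl | rfl | rfl) | ⟨⟨hkd, hdq⟩, heast⟩
  · exact hwd.not_ge (hpk.2.trans hkw)
  · exact hwd.not_ge hkw
  · exact hdw.not_ge hwq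
  · have hball : d ∈ Metric.ball w r := mem_ball_prod_iff_mem_Ioo.2
      ⟨⟨hwk.trans_le hkd.1, hdw⟩, hwd, hdq.2.trans_lt hqw⟩
    exact (subset_Ioi_prod_Ioi_of_mem_eastClear_of_mem_northClear hC hq hdq heast
      (hclear hball) hk).1.not_ge hkd.1

section MonotonePath

variable {F C : Set (ℝ × ℝ)} (hF : HasFatCompl F) (hC : IsPreconnected C) (hCF : C ⊆ F)
  {p q b : ℝ × ℝ} (hpb : p ≤ b) (hpq : p ≤ q) (hq : q ∈ C) (hCb : ∀ c ∈ C, c ≤ b + 1)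

include hF hC hCF hpb hpq hq hCb

lemma staircase_barrier_mem_of_le {s : ℝ} (hk : b ⊓ q ∈ C)
    (hks : b ⊓ q ≤ staircase (barrier C p (b ⊓ q) q) s)
    (hsq : staircase (barrier C p (b ⊓ q) q) s ≤ q) :
    staircase (barrier C p (b ⊓ q) q) s ∈ F := by
  by_contra hz
  obtain ⟨w, r, hr, hzw, hdisj⟩ := hF _ hz
  replace hdisj := hdisj.mono_right hCF
  rcases lt_or_ge (w.1 - r) (b ⊓ q).1 with hwk | hkw
  · have hkw := (fst_le_or_snd_le_of_notMem_ball (disjoint_right.1 hdisj hk) hzw hks).resolve_left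
      hwk.not_ge
    exact staircase_barrier_notMem_ball_of_snd_le hC (le_inf hpb hpq) hk hq
      (ball_subset_northClear hr hdisj hzw hsq hCb hkw) hwk hkw
      (fst_add_le_of_inf_snd_le hr hdisj hzw hsq hCb hq hkw)
      (lt_add_of_inf_le_sub hr hkw (mem_ball_prod_iff_mem_Ioo.1 hzw).2.1 hsq.2 (hCb q hq).2) hzw
  · exact staircase_barrier_notMem_ball_of_fst_le (le_inf hpb hpq) inf_le_right hks hsq
      (ball_subset_eastClear hr hdisj hzw hsq hCb hkw) hkw
      (snd_add_le_of_inf_fst_le hr hdisj hzw hsq hCb hq hkw) hzw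

lemma exists_monotone_isPathIn (hbox : Icc p b ⊆ C) : ∃ g, IsPathIn F p q g ∧ Monotone g := by
  set k := b ⊓ q
  have hpk : p ≤ k := le_inf hpb hpq
  have hkq : k ≤ q := inf_le_right
  have hmono := monotone_staircase_barrier (C := C) hpk hkq
  have hleft := staircase_barrier_left (C := C) hpk hkq
  have hmiddle := staircase_barrier_middle (C := C) hpk hkq
  have hright := staircase_barrier_right (C := C) hpk hkq
  have mem_F {s : ℝ} (hs : s ∈ Icc (p.1 + p.2) (q.1 + q.2)) :
      staircase (barrier C p k q) s ∈ F := by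
    rcases le_total s (k.1 + k.2) with hsk | hks
    · exact hCF (hbox ⟨hleft.symm.trans_le (hmono hs.1),
        (hmono hsk).trans (hmiddle.trans_le inf_le_left)⟩)
    · exact staircase_barrier_mem_of_le hF hC hCF hpb hpq hq hCb (hbox ⟨hpk, inf_le_left⟩)
        (hmiddle.symm.trans_le (hmono hks)) ((hmono hs.2).trans_eq hright)
  have hline : Monotone (AffineMap.lineMap (k := ℝ) (p.1 + p.2) (q.1 + q.2)) :=
    AffineMap.lineMap_mono (add_le_add hpq.1 hpq.2)
  refine ⟨staircase (barrier C p k q) ∘ AffineMap.lineMap (p.1 + p.2) (q.1 + q.2),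
    ⟨?_, ?_, ?_, fun t ht => mem_F ⟨?_, ?_⟩⟩, hmono.comp hline⟩
  · exact ((continuous_staircase_barrier hpk hkq).comp AffineMap.lineMap_continuous).continuousOn
  · simpa using hleft
  · simpa using hright
  · simpa using hline ht.1
  · simpa using hline ht.2

end MonotonePath

/-! ### Reduction to `p ≤ q` by reflections -/

lemma exists_isometryEquiv_orienting {lo hi x : ℝ} (hx : x ∈ Icc lo hi) (y : ℝ) :
    ∃ (e : ℝ ≃ᵢ ℝ) (b : ℝ), (Monotone e.symm ∨ Antitone e.symm) ∧ e x ≤ e y ∧ e x ≤ b ∧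
      (∀ t ∈ Icc (e x) b, e.symm t ∈ Icc lo hi) ∧ ∀ c ∈ Icc (lo - 1) (hi + 1), e c ≤ b + 1 := by
  rcases le_total x y with hxy | hyx
  · exact ⟨IsometryEquiv.refl ℝ, hi, Or.inl monotone_id, hxy, hx.2,
      fun t ht => ⟨hx.1.trans ht.1, ht.2⟩, fun c hc => hc.2⟩
  · refine ⟨IsometryEquiv.neg ℝ, -lo, Or.inr fun s t hst => neg_le_neg hst, neg_le_neg hyx,
      neg_le_neg hx.1, fun t ht => ⟨le_neg.1 ht.2, (neg_le.1 ht.1).trans hx.2⟩, fun c hc => ?_⟩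
    have := hc.1
    simp only [IsometryEquiv.neg_apply]
    linarith

lemma xyMonotone_prodMap_comp_of_monotone {g : ℝ → ℝ × ℝ} (hg : Monotone g) {e f : ℝ → ℝ}
    (he : Monotone e ∨ Antitone e) (hf : Monotone f ∨ Antitone f) :
    XYMonotone (Prod.map e f ∘ g) := by
  have hfst : Monotone (fun t => (g t).1) := monotone_fst.comp hg
  have hsnd : Monotone (fun t => (g t).2) := monotone_snd.comp hg
  exact ⟨he.imp (fun h => (h.comp hfst).monotoneOn _) fun h => (h.comp_monotone hfst).antitoneOn _,
    hf.imp (fun h => (h.comp hsnd).monotoneOn _) fun h => (h.comp_monotone hsnd).antitoneOn _⟩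

lemma exists_xyMonotone_isPathIn {F C : Set (ℝ × ℝ)} {xlo xhi ylo yhi : ℝ} {p q : ℝ × ℝ}
    (hF : HasFatCompl F) (hC : IsPreconnected C) (hCF : C ⊆ F)
    (hRC : Icc xlo xhi ×ˢ Icc ylo yhi ⊆ C)
    (hCbox : C ⊆ Icc (xlo - 1) (xhi + 1) ×ˢ Icc (ylo - 1) (yhi + 1))
    (hp : p ∈ Icc xlo xhi ×ˢ Icc ylo yhi) (hq : q ∈ C) :
    ∃ g, IsPathIn F p q g ∧ XYMonotone g := by
  obtain ⟨e, b₁, hesymm, hepq, hepb, hebox, heC⟩ := exists_isometryEquiv_orienting hp.1 q.1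
  obtain ⟨f, b₂, hfsymm, hfpq, hfpb, hfbox, hfC⟩ := exists_isometryEquiv_orienting hp.2 q.2
  let σ : ℝ × ℝ ≃ᵢ ℝ × ℝ := ⟨e.toEquiv.prodCongr f.toEquiv, e.isometry.prodMap f.isometry⟩
  obtain ⟨g, ⟨hcont, hg₀, hg₁, hgF⟩, hmono⟩ :
      ∃ g, IsPathIn (σ.symm ⁻¹' F) (σ p) (σ q) g ∧ Monotone g := by
    refine exists_monotone_isPathIn (C := σ '' C) (b := (b₁, b₂)) (hF.preimage σ.symm)
      (hC.image σ σ.continuous.continuousOn) ?_ ⟨hepb, hfpb⟩ ⟨hepq, hfpq⟩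
      (mem_image_of_mem σ hq) ?_ ?_
    · exact image_subset_iff.2 fun c hc => by simpa using hCF hc
    · exact forall_mem_image.2 fun c hc => ⟨heC _ (hCbox hc).1, hfC _ (hCbox hc).2⟩
    · intro v hv
      exact ⟨σ.symm v, hRC ⟨hebox _ ⟨hv.1.1, hv.2.1⟩, hfbox _ ⟨hv.1.2, hv.2.2⟩⟩,
        σ.apply_symm_apply v⟩
  refine ⟨σ.symm ∘ g, ⟨σ.symm.continuous.comp_continuousOn hcont, ?_, ?_, hgF⟩,
    xyMonotone_prodMap_comp_of_monotone hmono hesymm hfsymm⟩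
  · simp [hg₀]
  · simp [hg₁]

theorem shortestPath_corridor_giant_xyMonotone_general {W C : Set (ℝ × ℝ)} (hW : IsClosed W)
    {xlo xhi ylo yhi : ℝ} (hC : IsPreconnected C)
    (hCbox : C ⊆ freeSpace W ∩ Icc (xlo - 1) (xhi + 1) ×ˢ Icc (ylo - 1) (yhi + 1))
    (hRC : Icc xlo xhi ×ˢ Icc ylo yhi ⊆ C) {p q : ℝ × ℝ} (hp : p ∈ Icc xlo xhi ×ˢ Icc ylo yhi)
    (hq : q ∈ C) {g : ℝ → ℝ × ℝ} (hg : IsShortestPathIn (freeSpace W) p q g) :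
    XYMonotone g := by
  rw [subset_inter_iff] at hCbox
  obtain ⟨g', hg', hmono⟩ :=
    exists_xyMonotone_isPathIn (hasFatCompl_freeSpace hW) hC hCbox.1 hRC hCbox.2 hp hq
  exact hg.xyMonotone hg' hmono

/-- For a corridor `R` with giant component `γ(R)` of its influence
region, every shortest path in `F` between a point of `R` and a point of `γ(R)` is
xy-monotone. -/
theorem shortestPath_corridor_giant_xyMonotone
    (W : Set (ℝ × ℝ)) (hW : IsRectilinearEnv W)
    (F : Set (ℝ × ℝ)) (hF : F = freeSpace W)
    (sA sB tA tB : ℝ × ℝ)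
    (P : Set (ℝ × ℝ)) (hP : P = {sA, sB, tA, tB})
    (hsA : sA ∈ F) (hsB : sB ∈ F) (htA : tA ∈ F) (htB : tB ∈ F)
    (xlo xhi ylo yhi : ℝ) (R : Set (ℝ × ℝ))
    (hR : IsCorridor F P R) (hRrect : R = Icc xlo xhi ×ˢ Icc ylo yhi)
    (Rbox : Set (ℝ × ℝ))
    (hRbox : Rbox = Icc (xlo - 1) (xhi + 1) ×ˢ Icc (ylo - 1) (yhi + 1))
    (γR : Set (ℝ × ℝ)) (hγR : IsCompOf (F ∩ Rbox) γR) (hRsub : R ⊆ γR)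
    (p q : ℝ × ℝ) (hp : p ∈ R) (hq : q ∈ γR)
    (g : ℝ → ℝ × ℝ) (hg : IsShortestPathIn F p q g) :
    XYMonotone g := by
  subst hF hRrect hRbox
  obtain ⟨c, -, rfl⟩ := hγR
  exact shortestPath_corridor_giant_xyMonotone_general hW.2.1.isClosed
    isPreconnected_connectedComponentIn (connectedComponentIn_subset _ _) hRsub hp hq hg

end
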